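/- The generalized robustness of nonclassicality of the n-th Fock state equals e^n n!/n^n: R_C(|n⟩⟨n|) = e^n n!/n^n. -/

import Mathlib

noncomputable section
open scoped ENNReal ComplexOrder
open Filter

variable {H : Type} [NormedAddCommGroup H] [InnerProductSpace ℂ H] [CompleteSpace H]

local notation "⟪" x ", " y "⟫" => @inner ℂ _ _ x y

/-- Bounded operators on `H`. -/
abbrev Op (H : Type) [NormedAddCommGroup H] [InnerProductSpace ℂ H] : Type := H →L[ℂ] H

/-- The rank-one projector `|ψ⟩⟨ψ|`. -/
def projv (ψ : H) : Op H := (innerSL ℂ ψ).smulRight ψ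

/-- The trace of an operator with respect to a Hilbert basis. -/
def trB {ι : Type} (e : HilbertBasis ι ℂ H) (T : Op H) : ℂ := ∑' n, ⟪e n, T (e n)⟫

/-- A density operator: positive, trace-class (summable diagonal), unit trace. -/
def IsDensity {ι : Type} (e : HilbertBasis ι ℂ H) (ρ : Op H) : Prop :=
  ρ.IsPositive ∧ Summable (fun n => (⟪e n, ρ (e n)⟫).re) ∧ trB e ρ = 1

/-- The trace norm `Tr |T| = Tr √(T†T)`. -/
def traceNorm {ι : Type} (e : HilbertBasis ι ℂ H) (T : Op H) : ℝ :=
  ∑' n, (⟪e n, (CFC.sqrt (ContinuousLinearMap.adjoint T ∘L T)) (e n)⟫).re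

/-- Sequential closure of a set of operators in the trace norm. -/
def tnClosure {ι : Type} (e : HilbertBasis ι ℂ H) (S : Set (Op H)) : Set (Op H) :=
  {T | ∃ u : ℕ → Op H, (∀ k, u k ∈ S) ∧
    Tendsto (fun k => traceNorm e (u k - T)) atTop (nhds 0)}

/-- The generalized robustness `R_F(ρ) = inf {1 + λ | (ρ + λτ)/(1+λ) ∈ F, τ a density operator}`. -/
def Robustness {ι : Type} (e : HilbertBasis ι ℂ H) (F : Set (Op H)) (ρ : Op H) : ℝ≥0∞ :=
  sInf {r : ℝ≥0∞ | ∃ lam : ℝ, 0 ≤ lam ∧ ∃ τ : Op H, IsDensity e τ ∧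
    ((1 + lam)⁻¹ : ℝ) • (ρ + lam • τ) ∈ F ∧ r = ENNReal.ofReal (1 + lam)}

/-- The coherent state `|α⟩ = e^{-|α|²/2} ∑ₘ (αᵐ/√m!) |m⟩` in the Fock basis `e`. -/
def coh (e : HilbertBasis ℕ ℂ H) (α : ℂ) : H :=
  ∑' m : ℕ, (Complex.exp (-((‖α‖ : ℂ) ^ 2 / 2)) * α ^ m / (Real.sqrt (Nat.factorial m) : ℂ)) • e m

/-- The classical states: the trace-norm closed convex hull of coherent state projectors. -/
def ClassicalStates (e : HilbertBasis ℕ ℂ H) : Set (Op H) :=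
  tnClosure e (convexHull ℝ {T : Op H | ∃ α : ℂ, T = projv (coh e α)})

/-! The entry `⟨n|T|n⟩` of `T = |α⟩⟨α|` is the Poisson weight `e^{-r} rⁿ / n!` with `r = |α|²`,
which is largest at `r = n`. The bound `⟨n|T|n⟩ ≤ e^{-n} nⁿ / n!` survives convex combinations and
trace-norm limits, so it holds for every classical state and forces `1 + λ ≥ eⁿ n! / nⁿ`.

Conversely, the Poisson mixture of rate `n` of the Fock states dominates `(e^{-n} nⁿ / n!) |n⟩⟨n|`,
which gives the opposite bound once that mixture is known to be classical. The mixture is the limit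
of the averages of `|α⟩⟨α|` over `α = √n ωʲ`, where `ω` is a primitive `k`-th root of unity: the
average has no coherences between `|l⟩` and `|m⟩` for distinct `l, m < k`, and the inequality
`|x + y⟩⟨x + y| ≤ (1 + t) |x⟩⟨x| + (1 + t⁻¹) |y⟩⟨y|` controls the part beyond `k`. This inequality
is one-sided, but for two operators of equal trace a one-sided inequality up to an operator of small
trace already gives closeness in trace norm.
-/

section Parseval

variable {𝕜 E ι : Type*} [RCLike 𝕜] [NormedAddCommGroup E] [InnerProductSpace 𝕜 E]

lemma hasSum_norm_sq_inner (e : HilbertBasis ι 𝕜 E) (x : E) :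
    HasSum (fun i ↦ ‖inner 𝕜 (e i) x‖ ^ 2) (‖x‖ ^ 2) := by
  simpa [e.repr_apply_apply] using lp.hasSum_norm (p := 2) (by norm_num) (e.repr x)

lemma tsum_ofReal_norm_sq_inner (e : HilbertBasis ι 𝕜 E) (x : E) :
    ∑' i, ENNReal.ofReal (‖inner 𝕜 (e i) x‖ ^ 2) = ENNReal.ofReal (‖x‖ ^ 2) := by
  rw [← (hasSum_norm_sq_inner e x).tsum_eq,
    ENNReal.ofReal_tsum_of_nonneg (fun _ ↦ by positivity) (hasSum_norm_sq_inner e x).summable]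

lemma norm_sq_sub_sum_inner_smul {v : ι → E} (hv : Orthonormal 𝕜 v) (x : E) (s : Finset ι) :
    ‖x - ∑ i ∈ s, inner 𝕜 (v i) x • v i‖ ^ 2 =
      ‖x‖ ^ 2 - ∑ i ∈ s, ‖inner 𝕜 (v i) x‖ ^ 2 := by
  set y := ∑ i ∈ s, inner 𝕜 (v i) x • v i with hy
  have inner_left : inner 𝕜 x y = ((∑ i ∈ s, ‖inner 𝕜 (v i) x‖ ^ 2 : ℝ) : 𝕜) := by
    simp_rw [hy, inner_sum, inner_smul_right, ← inner_conj_symm x, RCLike.mul_conj]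
    push_cast
    rfl
  have inner_self : inner 𝕜 y y = ((∑ i ∈ s, ‖inner 𝕜 (v i) x‖ ^ 2 : ℝ) : 𝕜) := by
    simp_rw [hy, hv.inner_sum, RCLike.conj_mul]
    push_cast
    rfl
  rw [@norm_sub_sq 𝕜, ← @inner_self_eq_norm_sq 𝕜 _ _ _ _ y, inner_self, inner_left,
    RCLike.ofReal_re]
  ring

end Parseval

section Trace

variable {ι E : Type} [NormedAddCommGroup E] [InnerProductSpace ℂ E]

/-- The trace of `A` in the Hilbert basis `e`, with values in `[0, ∞]` so that no summability is
needed; it is the trace when `A` is positive, diagonal entries with negative real part being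
truncated to `0` otherwise. -/
def etrace (e : HilbertBasis ι ℂ E) (A : Op E) : ℝ≥0∞ :=
  ∑' i, ENNReal.ofReal (⟪e i, A (e i)⟫).re

lemma re_inner_real_smul_apply (c : ℝ) (A : Op E) (x : E) :
    (⟪x, (c • A) x⟫).re = c * (⟪x, A x⟫).re := by
  rw [smul_apply, inner_smul_right_eq_smul, Complex.smul_re, smul_eq_mul]

lemma re_inner_apply_mono {A B : Op E} (h : A ≤ B) (x : E) : (⟪x, A x⟫).re ≤ (⟪x, B x⟫).re := by
  simpa [inner_sub_right] using
    (ContinuousLinearMap.le_def A B |>.1 h).re_inner_nonneg_right x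

lemma re_inner_apply_nonneg {A : Op E} (h : 0 ≤ A) (x : E) : 0 ≤ (⟪x, A x⟫).re := by
  simpa using re_inner_apply_mono h x

lemma convex_setOf_re_inner_apply_le (x : E) (c : ℝ) :
    Convex ℝ {T : Op E | (⟪x, T x⟫).re ≤ c} :=
  convex_halfSpace_le ⟨fun A B ↦ by simp, fun a A ↦ by
    rw [re_inner_real_smul_apply, smul_eq_mul]⟩ c

variable (e : HilbertBasis ι ℂ E)

lemma etrace_mono {A B : Op E} (h : A ≤ B) : etrace e A ≤ etrace e B :=
  ENNReal.tsum_le_tsum fun i ↦ ENNReal.ofReal_le_ofReal (re_inner_apply_mono h (e i))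

lemma etrace_add {A B : Op E} (hA : 0 ≤ A) (hB : 0 ≤ B) :
    etrace e (A + B) = etrace e A + etrace e B := by
  simp_rw [etrace, add_apply, inner_add_right, Complex.add_re,
    ENNReal.ofReal_add (re_inner_apply_nonneg hA _) (re_inner_apply_nonneg hB _), ENNReal.tsum_add]

lemma etrace_smul {c : ℝ} (hc : 0 ≤ c) (A : Op E) :
    etrace e (c • A) = ENNReal.ofReal c * etrace e A := by
  simp_rw [etrace, re_inner_real_smul_apply, ENNReal.ofReal_mul hc, ENNReal.tsum_mul_left]

lemma etrace_sum {κ : Type*} {s : Finset κ} {A : κ → Op E} (hA : ∀ k ∈ s, 0 ≤ A k) :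
    etrace e (∑ k ∈ s, A k) = ∑ k ∈ s, etrace e (A k) := by
  simp_rw [etrace, sum_apply, inner_sum, Complex.re_sum]
  rw [← Summable.tsum_finsetSum fun _ _ ↦ ENNReal.summable]
  exact tsum_congr fun i ↦
    ENNReal.ofReal_sum_of_nonneg fun k hk ↦ re_inner_apply_nonneg (hA k hk) (e i)

lemma etrace_of_hasSum {κ : Type*} {A : κ → Op E} {T : Op E} (hA : ∀ k, 0 ≤ A k)
    (hT : HasSum A T) : etrace e T = ∑' k, etrace e (A k) := by
  have diagonal (x : E) : HasSum (fun k ↦ (⟪x, A k x⟫).re) (⟪x, T x⟫).re :=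
    hT.mapL (Complex.reCLM.comp (((innerSL ℂ x).restrictScalars ℝ).comp
      ((ContinuousLinearMap.apply ℂ E x).restrictScalars ℝ)))
  simp_rw [etrace]
  rw [ENNReal.tsum_comm]
  refine tsum_congr fun i ↦ ?_
  rw [← (diagonal (e i)).tsum_eq, ENNReal.ofReal_tsum_of_nonneg
    (fun k ↦ re_inner_apply_nonneg (hA k) (e i)) (diagonal (e i)).summable]

lemma re_inner_apply_le_toReal_etrace {A : Op E} (hA : etrace e A ≠ ⊤) (i : ι) :
    (⟪e i, A (e i)⟫).re ≤ (etrace e A).toReal :=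
  (ENNReal.ofReal_le_iff_le_toReal hA).1 (ENNReal.le_tsum i)

lemma trB_eq_tsum_re {A : Op E} (hA : 0 ≤ A) :
    trB e A = ((∑' i, (⟪e i, A (e i)⟫).re : ℝ) : ℂ) := by
  have hA' := (ContinuousLinearMap.nonneg_iff_isPositive A).1 hA
  simp_rw [trB, Complex.ofReal_tsum]
  exact tsum_congr fun i ↦
    Complex.eq_re_of_ofReal_le (r := 0) (by simpa using hA'.inner_nonneg_right (e i))

lemma isDensity_iff {ρ : Op E} : IsDensity e ρ ↔ 0 ≤ ρ ∧ etrace e ρ = 1 := by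
  rw [IsDensity, ← ContinuousLinearMap.nonneg_iff_isPositive]
  refine and_congr_right fun hρ ↦ ?_
  have nonneg (i : ι) : 0 ≤ (⟪e i, ρ (e i)⟫).re := re_inner_apply_nonneg hρ (e i)
  rw [trB_eq_tsum_re e hρ, Complex.ofReal_eq_one, etrace]
  constructor
  · rintro ⟨hs, h⟩
    rw [← ENNReal.ofReal_tsum_of_nonneg nonneg hs, h, ENNReal.ofReal_one]
  · intro h
    have hs : Summable fun i ↦ (⟪e i, ρ (e i)⟫).re := by
      simpa [nonneg] using ENNReal.summable_toReal (h.trans_ne ENNReal.one_ne_top)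
    rw [← ENNReal.ofReal_tsum_of_nonneg nonneg hs, ENNReal.ofReal_eq_one] at h
    exact ⟨hs, h⟩

lemma one_le_of_isDensity_le_smul {ρ σ : Op E} (hρ : IsDensity e ρ) (hσ : IsDensity e σ) {r : ℝ}
    (hr : 0 ≤ r) (h : ρ ≤ r • σ) : 1 ≤ r := by
  rw [isDensity_iff] at hρ hσ
  simpa [etrace_smul e hr, hρ.2, hσ.2] using etrace_mono e h

end Trace

section Ordered

variable {ι : Type} (e : HilbertBasis ι ℂ H)

lemma convex_setOf_isDensity : Convex ℝ {ρ : Op H | IsDensity e ρ} := by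
  intro ρ hρ σ hσ a b ha hb hab
  rw [Set.mem_ofPred_eq, isDensity_iff] at *
  have aρ_nonneg := smul_nonneg ha hρ.1
  have bσ_nonneg := smul_nonneg hb hσ.1
  refine ⟨add_nonneg aρ_nonneg bσ_nonneg, ?_⟩
  rw [etrace_add e aρ_nonneg bσ_nonneg, etrace_smul e ha, etrace_smul e hb, hρ.2, hσ.2, mul_one,
    mul_one, ← ENNReal.ofReal_add ha hb, hab, ENNReal.ofReal_one]

lemma etrace_sub {A B : Op H} (hA : 0 ≤ A) (hAB : A ≤ B) (hA_top : etrace e A ≠ ⊤) :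
    etrace e (B - A) = etrace e B - etrace e A := by
  refine ENNReal.eq_sub_of_add_eq hA_top ?_
  rw [← etrace_add e (sub_nonneg.2 hAB) hA, sub_add_cancel]

lemma etrace_star_mul_self (T : Op H) :
    etrace e (star T * T) = ∑' i, ENNReal.ofReal (‖T (e i)‖ ^ 2) := by
  refine tsum_congr fun i ↦ ?_
  rw [mul_apply_eq_comp, ContinuousLinearMap.star_eq_adjoint,
    ContinuousLinearMap.adjoint_inner_right, ← RCLike.re_eq_complex_re, inner_self_eq_norm_sq]

lemma etrace_star_mul_self_comm (T : Op H) : etrace e (star T * T) = etrace e (T * star T) := by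
  have etrace_mul_star := etrace_star_mul_self e (star T)
  rw [star_star] at etrace_mul_star
  simp_rw [etrace_mul_star, etrace_star_mul_self, ← tsum_ofReal_norm_sq_inner e]
  rw [ENNReal.tsum_comm]
  refine tsum_congr fun i ↦ tsum_congr fun j ↦ ?_
  rw [ContinuousLinearMap.star_eq_adjoint, ContinuousLinearMap.adjoint_inner_right,
    norm_inner_symm]

lemma etrace_conj_le {A Q : Op H} (hA : 0 ≤ A) (hQ : Q * star Q ≤ 1) :
    etrace e (star Q * A * Q) ≤ etrace e A := by
  have sqrt_star : star (CFC.sqrt A) = CFC.sqrt A := (CFC.sqrt_nonneg A).isSelfAdjoint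
  have sqrt_mul : CFC.sqrt A * CFC.sqrt A = A := CFC.sqrt_mul_sqrt_self A hA
  calc etrace e (star Q * A * Q)
      = etrace e (star (CFC.sqrt A * Q) * (CFC.sqrt A * Q)) := by
        rw [star_mul, sqrt_star, mul_assoc, mul_assoc, ← mul_assoc (CFC.sqrt A), sqrt_mul]
    _ = etrace e (CFC.sqrt A * (Q * star Q) * CFC.sqrt A) := by
        rw [etrace_star_mul_self_comm, star_mul, sqrt_star]
        simp only [mul_assoc]
    _ ≤ etrace e (CFC.sqrt A * 1 * CFC.sqrt A) :=
        etrace_mono e <| by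
          simpa only [sqrt_star] using star_left_conjugate_le_conjugate hQ (CFC.sqrt A)
    _ = etrace e A := by rw [mul_one, sqrt_mul]

-- `Q` is the projection onto `(ker D⁺)ᗮ`: it fixes `D⁺` and kills `D⁻`, which ranges in `ker D⁺`.
lemma exists_conj_eq_posPart {D : Op H} (hD : IsSelfAdjoint D) :
    ∃ Q : Op H, IsStarProjection Q ∧ Q * D * Q = D⁺ := by
  have : CompleteSpace (D⁺).ker := (D⁺).isClosed_ker.completeSpace_coe
  let S : Op H := (D⁺).ker.starProjection
  have hS : IsStarProjection S := isStarProjection_starProjection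
  have posPart_mul : D⁺ * S = 0 := by
    ext x
    exact LinearMap.mem_ker.1 ((D⁺).ker.starProjection_apply_mem x)
  have mul_posPart : S * D⁺ = 0 := by
    simpa [hS.isSelfAdjoint.star_eq, (CFC.posPart_nonneg D).isSelfAdjoint.star_eq] using
      congrArg star posPart_mul
  have mul_negPart : S * D⁻ = D⁻ := by
    ext x
    refine Submodule.starProjection_eq_self_iff.2 (LinearMap.mem_ker.2 ?_)
    exact congrArg (fun T : Op H ↦ T x) (CFC.posPart_mul_negPart D)
  refine ⟨1 - S, hS.one_sub, ?_⟩
  nth_rw 1 [← CFC.posPart_sub_negPart D hD]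
  simp [mul_sub, sub_mul, posPart_mul, mul_posPart, mul_negPart]

lemma etrace_posPart_le {D A : Op H} (hD : IsSelfAdjoint D) (hDA : D ≤ A) (hA : 0 ≤ A) :
    etrace e D⁺ ≤ etrace e A := by
  obtain ⟨Q, hQ, hQD⟩ := exists_conj_eq_posPart hD
  have hQs : star Q = Q := hQ.isSelfAdjoint
  calc etrace e D⁺ = etrace e (star Q * D * Q) := by rw [hQs, hQD]
    _ ≤ etrace e (star Q * A * Q) := etrace_mono e (star_left_conjugate_le_conjugate hDA Q)
    _ ≤ etrace e A := etrace_conj_le e hA (by rw [hQs, hQ.isIdempotentElem]; exact hQ.le_one)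

lemma traceNorm_eq_toReal (T : Op H) : traceNorm e T = (etrace e (CFC.abs T)).toReal := by
  rw [etrace, ENNReal.tsum_toReal_eq fun _ ↦ ENNReal.ofReal_ne_top]
  exact tsum_congr fun i ↦
    (ENNReal.toReal_ofReal (re_inner_apply_nonneg (CFC.abs_nonneg T) (e i))).symm

lemma traceNorm_nonneg (T : Op H) : 0 ≤ traceNorm e T := by
  rw [traceNorm_eq_toReal]
  exact ENNReal.toReal_nonneg

lemma etrace_abs_sub_le {A B : Op H} (hA : 0 ≤ A) (hB : 0 ≤ B) :
    etrace e (CFC.abs (A - B)) ≤ etrace e A + etrace e B := by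
  have hAB : IsSelfAdjoint (A - B) := hA.isSelfAdjoint.sub hB.isSelfAdjoint
  rw [← CFC.posPart_add_negPart (A - B) hAB,
    etrace_add e (CFC.posPart_nonneg _) (CFC.negPart_nonneg _), ← CFC.posPart_neg, neg_sub]
  exact add_le_add (etrace_posPart_le e hAB (sub_le_self A hB) hA)
    (etrace_posPart_le e (hB.isSelfAdjoint.sub hA.isSelfAdjoint) (sub_le_self B hA) hB)

lemma traceNorm_sub_le_of_le_add {A B C : Op H} (hA : 0 ≤ A) (hB : 0 ≤ B) (hC : 0 ≤ C)
    (hAC : A ≤ B + C) (hAB : etrace e A = etrace e B) (hB_top : etrace e B ≠ ⊤)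
    (hC_top : etrace e C ≠ ⊤) : traceNorm e (A - B) ≤ 2 * (etrace e C).toReal := by
  have etrace_rest : etrace e (B + C - A) = etrace e C := by
    rw [etrace_sub e hA hAC (hAB ▸ hB_top), etrace_add e hB hC, hAB,
      ENNReal.add_sub_cancel_left hB_top]
  have abs_le := etrace_abs_sub_le e hC (sub_nonneg.2 hAC)
  rw [etrace_rest, ← two_mul, show C - (B + C - A) = A - B by abel] at abs_le
  rw [traceNorm_eq_toReal]
  simpa using ENNReal.toReal_mono (by finiteness) abs_le

lemma re_inner_apply_sub_le_traceNorm {A B : Op H} (hA : 0 ≤ A) (hB : 0 ≤ B)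
    (hA_top : etrace e A ≠ ⊤) (hB_top : etrace e B ≠ ⊤) (i : ι) :
    (⟪e i, B (e i)⟫).re - (⟪e i, A (e i)⟫).re ≤ traceNorm e (A - B) := by
  have hAB : IsSelfAdjoint (A - B) := hA.isSelfAdjoint.sub hB.isSelfAdjoint
  have sub_le_abs : B - A ≤ CFC.abs (A - B) := by
    rw [← CFC.posPart_add_negPart (A - B) hAB, ← CFC.posPart_neg, neg_sub]
    exact (CFC.le_posPart (hB.isSelfAdjoint.sub hA.isSelfAdjoint)).trans
      (le_add_of_nonneg_left (CFC.posPart_nonneg _))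
  have abs_ne_top : etrace e (CFC.abs (A - B)) ≠ ⊤ :=
    ne_top_of_le_ne_top (ENNReal.add_ne_top.2 ⟨hA_top, hB_top⟩) (etrace_abs_sub_le e hA hB)
  calc (⟪e i, B (e i)⟫).re - (⟪e i, A (e i)⟫).re = (⟪e i, (B - A) (e i)⟫).re := by
        rw [sub_apply, inner_sub_right, Complex.sub_re]
    _ ≤ (⟪e i, CFC.abs (A - B) (e i)⟫).re := re_inner_apply_mono sub_le_abs (e i)
    _ ≤ traceNorm e (A - B) := by
        rw [traceNorm_eq_toReal]
        exact re_inner_apply_le_toReal_etrace e abs_ne_top i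

end Ordered

section Robustness

variable {ι : Type} (e : HilbertBasis ι ℂ H)

lemma re_inner_apply_le_of_mem_tnClosure {S : Set (Op H)}
    (hS : ∀ T ∈ S, 0 ≤ T ∧ etrace e T ≠ ⊤) (i : ι) {c : ℝ}
    (hc : ∀ T ∈ S, (⟪e i, T (e i)⟫).re ≤ c) {σ : Op H} (hσ : 0 ≤ σ) (hσ_top : etrace e σ ≠ ⊤)
    (hσS : σ ∈ tnClosure e S) : (⟪e i, σ (e i)⟫).re ≤ c := by
  obtain ⟨u, huS, hu⟩ := hσS
  have diagonal_gap_le (k : ℕ) : (⟪e i, σ (e i)⟫).re - c ≤ traceNorm e (u k - σ) := by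
    obtain ⟨uk_nonneg, uk_top⟩ := hS _ (huS k)
    linarith [hc _ (huS k), re_inner_apply_sub_le_traceNorm e uk_nonneg hσ uk_top hσ_top i]
  exact sub_nonpos.1 (ge_of_tendsto' hu diagonal_gap_le)

lemma isDensity_inv_smul_sub {ρ σ : Op H} (hρ : IsDensity e ρ) (hσ : IsDensity e σ) {s : ℝ}
    (hs : 0 < s) (h : ρ ≤ (1 + s) • σ) : IsDensity e (s⁻¹ • ((1 + s) • σ - ρ)) := by
  rw [isDensity_iff] at *
  have etrace_rest : etrace e ((1 + s) • σ - ρ) = ENNReal.ofReal s := by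
    rw [etrace_sub e hρ.1 h (by simp [hρ.2]), etrace_smul e (by positivity), hσ.2, hρ.2, mul_one,
      ← ENNReal.ofReal_one, ← ENNReal.ofReal_sub _ zero_le_one, add_sub_cancel_left]
  refine ⟨smul_nonneg (by positivity) (sub_nonneg.2 h), ?_⟩
  rw [etrace_smul e (by positivity), etrace_rest, ← ENNReal.ofReal_mul (by positivity),
    inv_mul_cancel₀ hs.ne', ENNReal.ofReal_one]

lemma robustness_le_one_add {F : Set (Op H)} {ρ σ : Op H} (hρ : IsDensity e ρ)
    (hσ : IsDensity e σ) (hσF : σ ∈ F) {s : ℝ} (hs : 0 < s) (h : ρ ≤ (1 + s) • σ) :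
    Robustness e F ρ ≤ ENNReal.ofReal (1 + s) := by
  refine sInf_le ⟨s, hs.le, _, isDensity_inv_smul_sub e hρ hσ hs h, ?_, rfl⟩
  rwa [smul_inv_smul₀ hs.ne', add_sub_cancel, inv_smul_smul₀ (by positivity)]

lemma robustness_le_of_le_smul {F : Set (Op H)} {ρ σ : Op H} (hρ : IsDensity e ρ)
    (hσ : IsDensity e σ) (hσF : σ ∈ F) {r : ℝ} (hr : 0 ≤ r) (h : ρ ≤ r • σ) :
    Robustness e F ρ ≤ ENNReal.ofReal r := by
  have one_le := one_le_of_isDensity_le_smul e hρ hσ hr h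
  have σ_nonneg : 0 ≤ σ := ((isDensity_iff e).1 hσ).1
  refine ENNReal.le_of_forall_pos_le_add fun ε hε _ ↦ ?_
  have h' : ρ ≤ (1 + (r - 1 + ε)) • σ :=
    h.trans (smul_le_smul_of_nonneg_right (by linarith [ε.coe_nonneg]) σ_nonneg)
  calc Robustness e F ρ ≤ ENNReal.ofReal (1 + (r - 1 + ε)) :=
        robustness_le_one_add e hρ hσ hσF (by have := NNReal.coe_pos.2 hε; linarith) h'
    _ = ENNReal.ofReal r + ε := by
        rw [← add_assoc, add_sub_cancel, ENNReal.ofReal_add hr ε.coe_nonneg,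
          ENNReal.ofReal_coe_nnreal]

lemma le_robustness_of_re_inner_apply_le {F : Set (Op H)} {ρ : Op H} (hρ : IsDensity e ρ) (x : H)
    {c : ℝ} (hc : 0 < c) (hF : ∀ σ ∈ F, IsDensity e σ → (⟪x, σ x⟫).re ≤ c) :
    ENNReal.ofReal ((⟪x, ρ x⟫).re / c) ≤ Robustness e F ρ := by
  refine le_sInf ?_
  rintro _ ⟨s, hs, τ, hτ, hσF, rfl⟩
  have one_add_pos : 0 < 1 + s := by positivity
  have hσ : IsDensity e ((1 + s)⁻¹ • (ρ + s • τ)) := by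
    rw [smul_add, smul_smul]
    exact convex_setOf_isDensity e hρ hτ (by positivity) (by positivity) (by field_simp)
  have τ_nonneg := re_inner_apply_nonneg ((isDensity_iff e).1 hτ).1 x
  have bound := hF _ hσF hσ
  rw [re_inner_real_smul_apply, add_apply, inner_add_right, Complex.add_re,
    re_inner_real_smul_apply, inv_mul_le_iff₀ one_add_pos] at bound
  refine ENNReal.ofReal_le_ofReal ((div_le_iff₀ hc).2 ?_)
  linarith [mul_nonneg hs τ_nonneg]

end Robustness

section RankOne

variable {E : Type} [NormedAddCommGroup E] [InnerProductSpace ℂ E]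

lemma projv_eq_rankOne (x : E) : projv x = InnerProductSpace.rankOne ℂ x x := rfl

lemma inner_projv_apply (x y : E) : ⟪y, projv x y⟫ = ((‖⟪y, x⟫‖ ^ 2 : ℝ) : ℂ) := by
  rw [projv_eq_rankOne, InnerProductSpace.rankOne_apply, inner_smul_right, ← inner_conj_symm x y,
    Complex.conj_mul', Complex.ofReal_pow]

lemma projv_smul (c : ℂ) (x : E) : projv (c • x) = ‖c‖ ^ 2 • projv x := by
  ext z
  rw [projv_eq_rankOne, projv_eq_rankOne, smul_apply, InnerProductSpace.rankOne_apply,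
    InnerProductSpace.rankOne_apply, inner_smul_left, smul_smul, ← Complex.coe_smul, smul_smul,
    Complex.ofReal_pow, ← Complex.conj_mul']
  congr 1
  ring

lemma norm_projv (x : E) : ‖projv x‖ = ‖x‖ ^ 2 := by
  rw [projv_eq_rankOne, InnerProductSpace.norm_rankOne, sq]

lemma projv_nonneg (x : E) : 0 ≤ projv x :=
  (ContinuousLinearMap.nonneg_iff_isPositive _).2 (InnerProductSpace.isPositive_rankOne_self x)

lemma etrace_projv {ι : Type} (e : HilbertBasis ι ℂ E) (x : E) :
    etrace e (projv x) = ENNReal.ofReal (‖x‖ ^ 2) := by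
  simp_rw [etrace, inner_projv_apply, Complex.ofReal_re, tsum_ofReal_norm_sq_inner]

lemma isDensity_projv {ι : Type} (e : HilbertBasis ι ℂ E) {x : E} (hx : ‖x‖ = 1) :
    IsDensity e (projv x) := by
  rw [isDensity_iff, etrace_projv, hx]
  exact ⟨projv_nonneg x, by simp⟩

lemma sum_projv_sum_smul {κ ι : Type*} [DecidableEq ι] {s : Finset κ} {t : Finset ι}
    {c : κ → ι → ℂ} {N : ℝ}
    (hc : ∀ l ∈ t, ∀ m ∈ t, ∑ j ∈ s, (starRingEnd ℂ) (c j l) * c j m = if l = m then (N : ℂ) else 0)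
    (v : ι → E) : ∑ j ∈ s, projv (∑ m ∈ t, c j m • v m) = N • ∑ m ∈ t, projv (v m) := by
  ext z
  simp only [projv_eq_rankOne, sum_apply, smul_apply, InnerProductSpace.rankOne_apply, sum_inner,
    inner_smul_left, Finset.smul_sum, smul_smul, Finset.sum_mul]
  rw [Finset.sum_comm]
  refine Finset.sum_congr rfl fun m hm ↦ ?_
  rw [← Finset.sum_smul, Finset.sum_comm, ← Complex.coe_smul, smul_smul]
  congr 1
  calc ∑ l ∈ t, ∑ j ∈ s, (starRingEnd ℂ) (c j l) * ⟪v l, z⟫ * c j m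
      = ∑ l ∈ t, (if l = m then (N : ℂ) else 0) * ⟪v l, z⟫ := by
        refine Finset.sum_congr rfl fun l hl ↦ ?_
        rw [← hc l hl m hm, Finset.sum_mul]
        exact Finset.sum_congr rfl fun j _ ↦ by ring
    _ = N * ⟪v m, z⟫ := by simp [hm]

end RankOne

lemma projv_add_le (x y : H) {t : ℝ} (ht : 0 < t) :
    projv (x + y) ≤ (1 + t) • projv x + (1 + t⁻¹) • projv y := by
  have ht' : (t : ℂ) ≠ 0 := by exact_mod_cast ht.ne'
  have gap : (1 + t) • projv x + (1 + t⁻¹) • projv y - projv (x + y) =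
      t⁻¹ • projv ((t : ℂ) • x - y) := by
    ext z
    simp only [projv_eq_rankOne, sub_apply, add_apply, smul_apply,
      InnerProductSpace.rankOne_apply, inner_add_left, inner_sub_left, inner_smul_left,
      Complex.conj_ofReal, ← Complex.coe_smul]
    push_cast
    match_scalars <;> field_simp <;> ring
  rw [← sub_nonneg, gap]
  exact smul_nonneg (by positivity) (projv_nonneg _)

section Diagonal

/-- The operator with eigenvectors `e i` and eigenvalues `p i`, as a norm-convergent series; it is
`0` by convention when that series is not summable. -/
def diagOp {ι : Type} (e : HilbertBasis ι ℂ H) (p : ι → ℝ) : Op H := ∑' i, p i • projv (e i)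

variable {ι : Type} (e : HilbertBasis ι ℂ H) {p : ι → ℝ}

lemma hasSum_diagOp (hp : Summable p) : HasSum (fun i ↦ p i • projv (e i)) (diagOp e p) := by
  refine (Summable.of_norm_bounded hp.norm fun i ↦ ?_).hasSum
  rw [norm_smul, norm_projv, e.orthonormal.1 i, one_pow, mul_one]

lemma etrace_diagOp (hp : Summable p) (hp₀ : ∀ i, 0 ≤ p i) :
    etrace e (diagOp e p) = ENNReal.ofReal (∑' i, p i) := by
  rw [etrace_of_hasSum e (fun i ↦ smul_nonneg (hp₀ i) (projv_nonneg _)) (hasSum_diagOp e hp),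
    ENNReal.ofReal_tsum_of_nonneg hp₀ hp]
  refine tsum_congr fun i ↦ ?_
  rw [etrace_smul e (hp₀ i), etrace_projv, e.orthonormal.1 i, one_pow, ENNReal.ofReal_one, mul_one]

lemma sum_smul_projv_le_diagOp (hp : Summable p) (hp₀ : ∀ i, 0 ≤ p i) (s : Finset ι) :
    ∑ i ∈ s, p i • projv (e i) ≤ diagOp e p :=
  sum_le_hasSum s (fun i _ ↦ smul_nonneg (hp₀ i) (projv_nonneg _)) (hasSum_diagOp e hp)

lemma diagOp_nonneg (hp : Summable p) (hp₀ : ∀ i, 0 ≤ p i) : 0 ≤ diagOp e p :=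
  (hasSum_diagOp e hp).nonneg fun i ↦ smul_nonneg (hp₀ i) (projv_nonneg _)

lemma isDensity_diagOp (hp : HasSum p 1) (hp₀ : ∀ i, 0 ≤ p i) : IsDensity e (diagOp e p) := by
  rw [isDensity_iff, etrace_diagOp e hp.summable hp₀, hp.tsum_eq]
  exact ⟨diagOp_nonneg e hp.summable hp₀, ENNReal.ofReal_one⟩

end Diagonal

section Mixture

/-- The equal-weight mixture of the operators `|x j⟩⟨x j|` for `j ∈ s`; it is `0` when `s` is
empty. -/
def uniformMixture {κ E : Type} [NormedAddCommGroup E] [InnerProductSpace ℂ E] (s : Finset κ)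
    (x : κ → E) : Op E :=
  (s.card : ℝ)⁻¹ • ∑ j ∈ s, projv (x j)

variable {κ ι : Type} {s : Finset κ}

section

variable {E : Type} [NormedAddCommGroup E] [InnerProductSpace ℂ E] {x : κ → E}

lemma uniformMixture_mem_convexHull (hs : s.Nonempty) {S : Set (Op E)}
    (hx : ∀ j ∈ s, projv (x j) ∈ S) : uniformMixture s x ∈ convexHull ℝ S := by
  rw [uniformMixture, Finset.smul_sum]
  refine (convex_convexHull ℝ S).sum_mem (fun _ _ ↦ by positivity) ?_ fun j hj ↦
    subset_convexHull ℝ S (hx j hj)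
  rw [Finset.sum_const, nsmul_eq_mul, mul_inv_cancel₀ (by simpa using hs.ne_empty)]

lemma etrace_uniformMixture_le (e : HilbertBasis ι ℂ E) {c : ℝ} (hc : 0 ≤ c)
    (hx : ∀ j ∈ s, ‖x j‖ ^ 2 ≤ c) : etrace e (uniformMixture s x) ≤ ENNReal.ofReal c := by
  rw [uniformMixture, etrace_smul e (by positivity), etrace_sum e fun j _ ↦ projv_nonneg (x j)]
  simp_rw [etrace_projv]
  rw [← ENNReal.ofReal_sum_of_nonneg fun _ _ ↦ by positivity,
    ← ENNReal.ofReal_mul (by positivity)]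
  exact ENNReal.ofReal_le_ofReal <| inv_mul_le_of_le_mul₀ (by positivity) hc <| by
    simpa using Finset.sum_le_card_nsmul s _ c hx

end

lemma uniformMixture_nonneg (x : κ → H) : 0 ≤ uniformMixture s x :=
  smul_nonneg (by positivity) (Finset.sum_nonneg fun j _ ↦ projv_nonneg (x j))

lemma uniformMixture_add_le (x y : κ → H) {t : ℝ} (ht : 0 < t) :
    uniformMixture s (x + y) ≤ (1 + t) • uniformMixture s x + (1 + t⁻¹) • uniformMixture s y := by
  simp_rw [uniformMixture]
  rw [smul_comm (1 + t), smul_comm (1 + t⁻¹), ← smul_add, Finset.smul_sum (r := 1 + t),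
    Finset.smul_sum (r := 1 + t⁻¹), ← Finset.sum_add_distrib]
  exact smul_le_smul_of_nonneg_left (Finset.sum_le_sum fun j _ ↦ projv_add_le (x j) (y j) ht)
    (by positivity)

variable (e : HilbertBasis ι ℂ H)

lemma isDensity_uniformMixture (hs : s.Nonempty) {x : κ → H} (hx : ∀ j ∈ s, ‖x j‖ = 1) :
    IsDensity e (uniformMixture s x) :=
  convexHull_min (fun _ hT ↦ hT) (convex_setOf_isDensity e) <|
    uniformMixture_mem_convexHull hs fun j hj ↦ isDensity_projv e (hx j hj)

lemma traceNorm_uniformMixture_sub_le (hs : s.Nonempty) {x y : κ → H} (hx : ∀ j ∈ s, ‖x j‖ = 1)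
    {δ : ℝ} (hxy : ∀ j ∈ s, ‖x j - y j‖ ^ 2 ≤ δ) {D : Op H} (hD : IsDensity e D)
    (hyD : uniformMixture s y ≤ D) {t : ℝ} (ht : 0 < t) :
    traceNorm e (uniformMixture s x - D) ≤ 2 * (t + (1 + t⁻¹) * δ) := by
  have hδ : 0 ≤ δ := by
    obtain ⟨j, hj⟩ := hs
    exact (sq_nonneg _).trans (hxy j hj)
  set C : Op H := t • D + (1 + t⁻¹) • uniformMixture s (x - y) with hC
  rw [isDensity_iff] at hD
  have hX := (isDensity_iff e).1 (isDensity_uniformMixture e hs hx)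
  have tD_nonneg : 0 ≤ t • D := smul_nonneg ht.le hD.1
  have tail_nonneg : 0 ≤ (1 + t⁻¹) • uniformMixture s (x - y) :=
    smul_nonneg (by positivity) (uniformMixture_nonneg _)
  have le_add : uniformMixture s x ≤ D + C := by
    calc uniformMixture s x = uniformMixture s (y + (x - y)) := by rw [add_sub_cancel]
      _ ≤ (1 + t) • uniformMixture s y + (1 + t⁻¹) • uniformMixture s (x - y) :=
          uniformMixture_add_le y (x - y) ht
      _ ≤ (1 + t) • D + (1 + t⁻¹) • uniformMixture s (x - y) := by gcongr
      _ = D + C := by rw [hC, add_smul, one_smul, add_assoc]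
  have etrace_le : etrace e C ≤ ENNReal.ofReal (t + (1 + t⁻¹) * δ) := by
    rw [hC, etrace_add e tD_nonneg tail_nonneg, etrace_smul e ht.le, hD.2, mul_one,
      etrace_smul e (by positivity), ENNReal.ofReal_add ht.le (by positivity),
      ENNReal.ofReal_mul (by positivity)]
    gcongr
    exact etrace_uniformMixture_le e hδ hxy
  calc traceNorm e (uniformMixture s x - D) ≤ 2 * (etrace e C).toReal :=
        traceNorm_sub_le_of_le_add e hX.1 hD.1 (add_nonneg tD_nonneg tail_nonneg) le_add
          (hX.2.trans hD.2.symm) (by simp [hD.2])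
          (ne_top_of_le_ne_top ENNReal.ofReal_ne_top etrace_le)
    _ ≤ 2 * (t + (1 + t⁻¹) * δ) := by
        gcongr
        exact ENNReal.toReal_le_of_le_ofReal (by positivity) etrace_le

end Mixture

section Poisson

/-- The probability that a Poisson variable of rate `r` equals `m`. -/
def poissonWeight (r : ℝ) (m : ℕ) : ℝ := Real.exp (-r) * r ^ m / m.factorial

lemma hasSum_poissonWeight (r : ℝ) : HasSum (poissonWeight r) 1 := by
  have h := (NormedSpace.expSeries_div_hasSum_exp r).mul_left (Real.exp (-r))
  rw [← Real.exp_eq_exp_ℝ, ← Real.exp_add, neg_add_cancel, Real.exp_zero] at h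
  unfold poissonWeight
  simpa only [mul_div_assoc] using h

lemma poissonWeight_nonneg {r : ℝ} (hr : 0 ≤ r) (m : ℕ) : 0 ≤ poissonWeight r m := by
  unfold poissonWeight
  positivity

lemma poissonWeight_self_pos (n : ℕ) : 0 < poissonWeight n n := by
  have : (0 : ℝ) < (n : ℝ) ^ n := by exact_mod_cast Nat.pow_self_pos
  unfold poissonWeight
  positivity

lemma inv_poissonWeight_self (n : ℕ) :
    (poissonWeight n n)⁻¹ = Real.exp n * n.factorial / (n : ℝ) ^ n := by
  rw [poissonWeight, Real.exp_neg, inv_div, div_mul_eq_div_div, div_inv_eq_mul, mul_comm]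

lemma poissonWeight_le_self {r : ℝ} (hr : 0 ≤ r) (n : ℕ) :
    poissonWeight r n ≤ poissonWeight n n := by
  unfold poissonWeight
  gcongr ?_ / _
  rcases n.eq_zero_or_pos with rfl | hn
  · simpa using hr
  have hn' : (0 : ℝ) < n := by exact_mod_cast hn
  have ratio_le : r / n ≤ Real.exp (r / n - 1) := by
    linarith [Real.add_one_le_exp (r / n - 1)]
  calc Real.exp (-r) * r ^ n = Real.exp (-r) * (r / n) ^ n * n ^ n := by
        rw [mul_assoc, ← mul_pow, div_mul_cancel₀ _ hn'.ne']
    _ ≤ Real.exp (-r) * Real.exp (r / n - 1) ^ n * n ^ n := by gcongr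
    _ = Real.exp (-n) * n ^ n := by
        rw [← Real.exp_nat_mul, ← Real.exp_add]
        congr 2
        field_simp
        ring

/-- The probability that a Poisson variable of rate `r` is at least `k`. -/
def poissonTail (r : ℝ) (k : ℕ) : ℝ := 1 - ∑ m ∈ Finset.range k, poissonWeight r m

lemma tendsto_poissonTail (r : ℝ) : Tendsto (poissonTail r) atTop (nhds 0) := by
  unfold poissonTail
  simpa using (hasSum_poissonWeight r).tendsto_sum_nat.const_sub 1

end Poisson

section RootsOfUnity

variable {ω : ℂ} {k l m : ℕ}

lemma conj_pow_mul_pow_eq_one_iff (hω : IsPrimitiveRoot ω k) (hl : l < k) (hm : m < k) :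
    starRingEnd ℂ ω ^ l * ω ^ m = 1 ↔ l = m := by
  rw [← Complex.inv_eq_conj (hω.norm'_eq_one (by omega)), inv_pow,
    inv_mul_eq_one₀ (pow_ne_zero _ (hω.ne_zero (by omega)))]
  exact ⟨fun h ↦ hω.pow_inj hl hm h, fun h ↦ by rw [h]⟩

lemma sum_conj_pow_mul_pow (hω : IsPrimitiveRoot ω k) (hl : l < k) (hm : m < k) :
    ∑ j ∈ Finset.range k, (starRingEnd ℂ) (ω ^ (j * l)) * ω ^ (j * m) =
      if l = m then (k : ℂ) else 0 := by
  set q := starRingEnd ℂ ω ^ l * ω ^ m with hq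
  have term_eq (j : ℕ) : (starRingEnd ℂ) (ω ^ (j * l)) * ω ^ (j * m) = q ^ j := by
    rw [hq, map_pow, mul_pow, ← pow_mul, ← pow_mul, mul_comm l, mul_comm m]
  simp_rw [term_eq]
  split_ifs with hlm
  · simp [(conj_pow_mul_pow_eq_one_iff hω hl hm).2 hlm, hq]
  · have q_pow : q ^ k = 1 := by
      rw [← term_eq, pow_mul, pow_mul, hω.pow_eq_one]
      simp
    rw [geom_sum_eq (mt (conj_pow_mul_pow_eq_one_iff hω hl hm).1 hlm), q_pow, sub_self, zero_div]

end RootsOfUnity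

section Coherent

/-- The coefficient of the coherent state `|α⟩` on the Fock state `|m⟩`. -/
def cohCoeff (α : ℂ) (m : ℕ) : ℂ :=
  Complex.exp (-((‖α‖ : ℂ) ^ 2 / 2)) * α ^ m / (Real.sqrt (Nat.factorial m) : ℂ)

lemma norm_sq_cohCoeff (α : ℂ) (m : ℕ) : ‖cohCoeff α m‖ ^ 2 = poissonWeight (‖α‖ ^ 2) m := by
  have norm_exp : ‖Complex.exp (-((‖α‖ : ℂ) ^ 2 / 2))‖ ^ 2 = Real.exp (-‖α‖ ^ 2) := by
    rw [Complex.norm_exp, ← Real.exp_nat_mul]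
    congr 1
    norm_cast
    ring
  rw [cohCoeff, poissonWeight, norm_div, norm_mul, div_pow, mul_pow, norm_exp, norm_pow,
    pow_right_comm, Complex.norm_real, Real.norm_eq_abs, sq_abs, Real.sq_sqrt (by positivity)]

lemma cohCoeff_mul_pow (α : ℂ) {ω : ℂ} (hω : ‖ω‖ = 1) (j m : ℕ) :
    cohCoeff (α * ω ^ j) m = ω ^ (j * m) * cohCoeff α m := by
  rw [cohCoeff, cohCoeff, norm_mul, norm_pow, hω, one_pow, mul_one, mul_pow, pow_mul]
  ring

section

variable {E : Type} [NormedAddCommGroup E] [InnerProductSpace ℂ E] (e : HilbertBasis ℕ ℂ E)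

lemma inner_coh (α : ℂ) (m : ℕ) : ⟪e m, coh e α⟫ = cohCoeff α m := by
  have square_summable : Memℓp (cohCoeff α) 2 := by
    rw [memℓp_gen_iff (by norm_num)]
    simpa [norm_sq_cohCoeff] using (hasSum_poissonWeight _).summable
  let f : lp (fun _ : ℕ ↦ ℂ) 2 := ⟨cohCoeff α, square_summable⟩
  have coh_eq : coh e α = e.repr.symm f := (e.hasSum_repr_symm f).tsum_eq
  rw [coh_eq, ← e.repr_apply_apply, LinearIsometryEquiv.apply_symm_apply]

lemma norm_coh (α : ℂ) : ‖coh e α‖ = 1 := by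
  have h := hasSum_norm_sq_inner e (coh e α)
  simp_rw [inner_coh, norm_sq_cohCoeff] at h
  exact (pow_eq_one_iff_of_nonneg (norm_nonneg _) two_ne_zero).1
    (h.unique (hasSum_poissonWeight _))

lemma re_inner_projv_coh_le (α : ℂ) (n : ℕ) :
    (⟪e n, projv (coh e α) (e n)⟫).re ≤ poissonWeight n n := by
  rw [inner_projv_apply, Complex.ofReal_re, inner_coh, norm_sq_cohCoeff]
  exact poissonWeight_le_self (by positivity) n

/-- The part of the coherent state `|α⟩` on the Fock states `|m⟩` with `m < k`. -/
def cohTrunc (α : ℂ) (k : ℕ) : E := ∑ m ∈ Finset.range k, cohCoeff α m • e m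

lemma norm_sq_coh_sub_cohTrunc (α : ℂ) (k : ℕ) :
    ‖coh e α - cohTrunc e α k‖ ^ 2 = poissonTail (‖α‖ ^ 2) k := by
  have h := norm_sq_sub_sum_inner_smul e.orthonormal (coh e α) (Finset.range k)
  rw [cohTrunc, poissonTail]
  simpa only [inner_coh, norm_sq_cohCoeff, norm_coh, one_pow] using h

lemma uniformMixture_cohTrunc {ω : ℂ} {k : ℕ} (hk : k ≠ 0) (hω : IsPrimitiveRoot ω k) (α : ℂ) :
    uniformMixture (Finset.range k) (fun j ↦ cohTrunc e (α * ω ^ j) k) =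
      ∑ m ∈ Finset.range k, poissonWeight (‖α‖ ^ 2) m • projv (e m) := by
  have dephase := sum_projv_sum_smul (s := Finset.range k) (t := Finset.range k)
    (c := fun j m ↦ ω ^ (j * m)) (N := k)
    (fun l hl m hm ↦ by
      rw [Complex.ofReal_natCast]
      exact sum_conj_pow_mul_pow hω (Finset.mem_range.1 hl) (Finset.mem_range.1 hm))
    fun m ↦ cohCoeff α m • e m
  simp_rw [uniformMixture, cohTrunc, cohCoeff_mul_pow α (hω.norm'_eq_one hk), mul_smul]
  rw [dephase, Finset.card_range, inv_smul_smul₀ (by exact_mod_cast hk)]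
  simp_rw [projv_smul, norm_sq_cohCoeff]

end

variable (e : HilbertBasis ℕ ℂ H)

lemma traceNorm_uniformMixture_coh_sub_le {ω : ℂ} {k : ℕ} (hk : k ≠ 0) (hω : IsPrimitiveRoot ω k)
    (α : ℂ) {t : ℝ} (ht : 0 < t) :
    traceNorm e (uniformMixture (Finset.range k) (fun j ↦ coh e (α * ω ^ j)) -
        diagOp e (poissonWeight (‖α‖ ^ 2))) ≤
      2 * (t + (1 + t⁻¹) * poissonTail (‖α‖ ^ 2) k) := by
  have weight_nonneg := poissonWeight_nonneg (sq_nonneg ‖α‖)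
  have hasSum_weight := hasSum_poissonWeight (‖α‖ ^ 2)
  refine traceNorm_uniformMixture_sub_le e (Finset.nonempty_range_iff.2 hk)
    (y := fun j ↦ cohTrunc e (α * ω ^ j) k) (fun j _ ↦ norm_coh e _)
    (fun j _ ↦ ?_) (isDensity_diagOp e hasSum_weight weight_nonneg) ?_ ht
  · rw [norm_sq_coh_sub_cohTrunc, norm_mul, norm_pow, hω.norm'_eq_one hk, one_pow, mul_one]
  · rw [uniformMixture_cohTrunc e hk hω]
    exact sum_smul_projv_le_diagOp e hasSum_weight.summable weight_nonneg _

lemma diagOp_poissonWeight_mem_classicalStates {r : ℝ} (hr : 0 ≤ r) :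
    diagOp e (poissonWeight r) ∈ ClassicalStates e := by
  let α : ℂ := Real.sqrt r
  have norm_sq_α : ‖α‖ ^ 2 = r := by
    rw [Complex.norm_real, Real.norm_eq_abs, sq_abs, Real.sq_sqrt hr]
  let ω (k : ℕ) : ℂ := Complex.exp (2 * Real.pi * Complex.I / (k + 1 : ℕ))
  have hω (k : ℕ) : IsPrimitiveRoot (ω k) (k + 1) := Complex.isPrimitiveRoot_exp _ k.succ_ne_zero
  refine ⟨fun k ↦ uniformMixture (Finset.range (k + 1)) fun j ↦ coh e (α * ω k ^ j),
    fun k ↦ uniformMixture_mem_convexHull (by simp) fun j _ ↦ ⟨_, rfl⟩, ?_⟩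
  refine tendsto_order.2 ⟨fun a ha ↦ .of_forall fun k ↦ ha.trans_le (traceNorm_nonneg e _),
    fun a ha ↦ ?_⟩
  have quarter_pos : 0 < a / 4 := by positivity
  have tail_lim : Tendsto (fun k ↦ (1 + (a / 4)⁻¹) * poissonTail r (k + 1)) atTop (nhds 0) := by
    simpa using ((tendsto_poissonTail r).comp (tendsto_add_atTop_nat 1)).const_mul _
  filter_upwards [tail_lim.eventually_lt_const quarter_pos] with k hk
  have bound := traceNorm_uniformMixture_coh_sub_le e k.succ_ne_zero (hω k) α quarter_pos
  rw [norm_sq_α] at bound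
  linarith

lemma re_inner_apply_le_of_mem_classicalStates (n : ℕ) {σ : Op H} (hσ : IsDensity e σ)
    (hσC : σ ∈ ClassicalStates e) : (⟪e n, σ (e n)⟫).re ≤ poissonWeight n n := by
  rw [isDensity_iff] at hσ
  refine re_inner_apply_le_of_mem_tnClosure e (fun T hT ↦ ?_) n (fun T hT ↦ ?_) hσ.1
    (by simp [hσ.2]) hσC
  · have hT' : IsDensity e T := by
      refine convexHull_min ?_ (convex_setOf_isDensity e) hT
      rintro _ ⟨α, rfl⟩
      exact isDensity_projv e (norm_coh e α)
    rw [isDensity_iff] at hT'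
    simp [hT']
  · refine convexHull_min (t := {T : Op H | (⟪e n, T (e n)⟫).re ≤ poissonWeight n n}) ?_
      (convex_setOf_re_inner_apply_le (e n) _) hT
    rintro _ ⟨α, rfl⟩
    exact re_inner_projv_coh_le e α n

end Coherent

lemma projv_le_smul_diagOp_poissonWeight (e : HilbertBasis ℕ ℂ H) (n : ℕ) :
    projv (e n) ≤ (poissonWeight n n)⁻¹ • diagOp e (poissonWeight n) := by
  have h := sum_smul_projv_le_diagOp e (hasSum_poissonWeight n).summable
    (poissonWeight_nonneg n.cast_nonneg) {n}
  rw [Finset.sum_singleton] at h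
  have weight_pos := poissonWeight_self_pos n
  calc projv (e n) = (poissonWeight n n)⁻¹ • poissonWeight n n • projv (e n) :=
        (inv_smul_smul₀ weight_pos.ne' _).symm
    _ ≤ (poissonWeight n n)⁻¹ • diagOp e (poissonWeight n) :=
        smul_le_smul_of_nonneg_left h (inv_nonneg.2 weight_pos.le)

/-- the generalized robustness of nonclassicality of the `n`-th Fock state is
`R_C(|n⟩⟨n|) = eⁿ n!/nⁿ`. -/
theorem robustness_nonclassicality_fock (e : HilbertBasis ℕ ℂ H) (n : ℕ) :
    Robustness e (ClassicalStates e) (projv (e n)) =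
      ENNReal.ofReal (Real.exp n * (Nat.factorial n : ℝ) / (n : ℝ) ^ n) := by
  have fock_isDensity : IsDensity e (projv (e n)) := isDensity_projv e (e.orthonormal.1 n)
  have fock_diagonal : (⟪e n, projv (e n) (e n)⟫).re = 1 := by
    simp [inner_projv_apply, e.orthonormal.1 n]
  rw [← inv_poissonWeight_self]
  refine le_antisymm ?_ ?_
  · exact robustness_le_of_le_smul e fock_isDensity
      (isDensity_diagOp e (hasSum_poissonWeight n) (poissonWeight_nonneg n.cast_nonneg))
      (diagOp_poissonWeight_mem_classicalStates e n.cast_nonneg)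
      (inv_nonneg.2 (poissonWeight_self_pos n).le) (projv_le_smul_diagOp_poissonWeight e n)
  · have h := le_robustness_of_re_inner_apply_le e fock_isDensity (e n) (poissonWeight_self_pos n)
      fun σ hσC hσ ↦ re_inner_apply_le_of_mem_classicalStates e n hσ hσC
    rwa [fock_diagonal, one_div] at h
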